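/- Let U, V, Z be i.i.d. standard normal random variables and for ρ ∈ [0,1] define f(ρ) = E[ max(0, √(1−ρ)·U + √ρ·Z) · max(0, √(1−ρ)·V + √ρ·Z) ]. Then: (i) f(0) = 1/(2π); (ii) f is right-differentiable at 0 with f′(0) = 1/4; and (iii) there exists a constant C > 0 such that |f(ρ) − 1/(2π) − ρ/4| ≤ C·ρ² for all ρ ∈ [0, 1/5]. -/

import Mathlib

open MeasureTheory ProbabilityTheory Real

noncomputable section

def relu (t : ℝ) : ℝ := max 0 t

/-- law of three i.i.d. standard normals `(U, V, Z) = (u 0, u 1, u 2)`. -/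
def stdGaussian3 : Measure (Fin 3 → ℝ) :=
  Measure.pi fun _ => gaussianReal 0 1

/-- the ReLU (arc-cosine) kernel of a correlated standard Gaussian pair:
`f ρ = E[ψ(√(1−ρ)U + √ρZ) ψ(√(1−ρ)V + √ρZ)]`. -/
def reluKernel (ρ : ℝ) : ℝ :=
  ∫ u, relu (Real.sqrt (1 - ρ) * u 0 + Real.sqrt ρ * u 2) *
       relu (Real.sqrt (1 - ρ) * u 1 + Real.sqrt ρ * u 2) ∂stdGaussian3

/-!
If `x` and `y` are vectors of a Euclidean space and `u` is a standard Gaussian vector in it, the law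
of `(⟪x, u⟫, ⟪y, u⟫)` depends only on the Gram matrix of `x` and `y`, so the expectation of
`ψ(⟪x, u⟫) ψ(⟪y, u⟫)` can be computed in the plane. There the integrand is homogeneous, and polar
coordinates reduce it to the integral of `cos φ * cos (φ - θ)` over the arc on which both factors
are positive, where `θ` is the angle between `x` and `y`. For `x = (√(1 - ρ), 0, √ρ)` and
`y = (0, √(1 - ρ), √ρ)` this gives the closed form `(√(1 - ρ²) + ρ (π / 2 + arcsin ρ)) / (2π)`.
Its second-order remainder at `0` is `(ρ arcsin ρ - (1 - √(1 - ρ²))) / (2π)`, in which both terms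
are of order `ρ²`; Jordan's inequality makes the bound uniform on `[0, 1]`.
-/

open scoped RealInnerProductSpace

lemma relu_mul_of_nonneg {a : ℝ} (ha : 0 ≤ a) (t : ℝ) : relu (a * t) = a * relu t := by
  rw [relu, relu, mul_max_of_nonneg _ _ ha, mul_zero]

@[fun_prop]
lemma continuous_relu : Continuous relu := by
  unfold relu
  fun_prop

section Gram

variable {ι E F : Type*}
  [NormedAddCommGroup E] [InnerProductSpace ℝ E] [FiniteDimensional ℝ E]
  [MeasurableSpace E] [BorelSpace E]
  [NormedAddCommGroup F] [InnerProductSpace ℝ F] [FiniteDimensional ℝ F]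
  [MeasurableSpace F] [BorelSpace F]

lemma charFunDual_map_inner_stdGaussian [Fintype ι] [DecidableEq ι] (x : ι → E)
    (L : StrongDual ℝ (ι → ℝ)) :
    charFunDual ((stdGaussian E).map fun u i => ⟪x i, u⟫) L = Complex.exp
      (-((∑ i, ∑ j, L (Pi.single i 1) * L (Pi.single j 1) * ⟪x i, x j⟫ : ℝ) : ℂ) / 2) := by
  set w : E := ∑ i, L (Pi.single i 1) • x i with hw
  have hL : L.comp (ContinuousLinearMap.pi fun i => innerSL ℝ (x i)) = innerSL ℝ w := by
    ext u
    have hpi : (fun i => ⟪x i, u⟫) = ∑ i, ⟪x i, u⟫ • Pi.single i (1 : ℝ) := by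
      simpa using pi_eq_sum_univ' fun i => ⟪x i, u⟫
    change L (fun i => ⟪x i, u⟫) = ⟪w, u⟫
    rw [hpi, map_sum, hw, sum_inner]
    simp_rw [map_smul, real_inner_smul_left, smul_eq_mul, mul_comm]
  have hnorm : ‖w‖ ^ 2 = ∑ i, ∑ j, L (Pi.single i 1) * L (Pi.single j 1) * ⟪x i, x j⟫ := by
    rw [← real_inner_self_eq_norm_sq, hw, sum_inner]
    simp_rw [inner_sum, real_inner_smul_left, real_inner_smul_right, mul_assoc]
  have hmap := charFunDual_map (μ := stdGaussian E)
    (ContinuousLinearMap.pi fun i => innerSL ℝ (x i)) L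
  rw [hL, charFunDual_stdGaussian, innerSL_apply_norm, ← Complex.ofReal_pow, hnorm] at hmap
  exact hmap

theorem map_inner_stdGaussian_congr [Finite ι] {x : ι → E} {y : ι → F}
    (hxy : ∀ i j, ⟪x i, x j⟫ = ⟪y i, y j⟫) :
    (stdGaussian E).map (fun u i => ⟪x i, u⟫) = (stdGaussian F).map (fun v i => ⟪y i, v⟫) := by
  classical
  cases nonempty_fintype ι
  have : IsProbabilityMeasure ((stdGaussian E).map (fun u i => ⟪x i, u⟫)) :=
    Measure.isProbabilityMeasure_map (by fun_prop)
  have : IsProbabilityMeasure ((stdGaussian F).map (fun v i => ⟪y i, v⟫)) :=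
    Measure.isProbabilityMeasure_map (by fun_prop)
  apply Measure.ext_of_charFunDual
  ext L
  simp only [charFunDual_map_inner_stdGaussian, hxy]

theorem map_inner_pair_stdGaussian_congr {x y : E} {a b : F} (hxa : ‖x‖ = ‖a‖) (hyb : ‖y‖ = ‖b‖)
    (hinner : ⟪x, y⟫ = ⟪a, b⟫) :
    (stdGaussian E).map (fun u => (⟪x, u⟫, ⟪y, u⟫)) =
      (stdGaussian F).map fun v => (⟪a, v⟫, ⟪b, v⟫) := by
  have hgram : ∀ i j, ⟪(![x, y] : Fin 2 → E) i, ![x, y] j⟫ =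
      ⟪(![a, b] : Fin 2 → F) i, ![a, b] j⟫ := by
    have hinner' : ⟪y, x⟫ = ⟪b, a⟫ := by rw [real_inner_comm, hinner, real_inner_comm]
    simp [Fin.forall_fin_two, hxa, hyb, hinner, hinner']
  have hlaw := congrArg (Measure.map fun v : Fin 2 → ℝ => (v 0, v 1))
    (map_inner_stdGaussian_congr hgram)
  rw [Measure.map_map (by fun_prop) (by fun_prop),
    Measure.map_map (by fun_prop) (by fun_prop)] at hlaw
  exact hlaw

end Gram

lemma map_stdGaussian_fin_two :
    (stdGaussian (EuclideanSpace ℝ (Fin 2))).map (fun v => (v 0, v 1)) =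
      (gaussianReal 0 1).prod (gaussianReal 0 1) := by
  rw [← map_pi_eq_stdGaussian, Measure.map_map (by fun_prop) (by fun_prop)]
  exact (measurePreserving_finTwoArrow (gaussianReal 0 1)).map_eq

lemma integral_gaussianReal_prod_gaussianReal (F : ℝ × ℝ → ℝ) :
    ∫ p, F p ∂(gaussianReal 0 1).prod (gaussianReal 0 1) =
      (2 * π)⁻¹ * ∫ p : ℝ × ℝ, exp (-(p.1 ^ 2 + p.2 ^ 2) / 2) * F p := by
  have hmeas := measurable_gaussianPDF 0 1
  have hdensity (p : ℝ × ℝ) : (gaussianPDF 0 1 p.1 * gaussianPDF 0 1 p.2).toReal =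
      (2 * π)⁻¹ * exp (-(p.1 ^ 2 + p.2 ^ 2) / 2) := by
    rw [ENNReal.toReal_mul, toReal_gaussianPDF, toReal_gaussianPDF, gaussianPDFReal,
      gaussianPDFReal]
    have hsqrt : (√(2 * π))⁻¹ * (√(2 * π))⁻¹ = (2 * π)⁻¹ := by
      rw [← mul_inv, mul_self_sqrt (by positivity)]
    rw [NNReal.coe_one, mul_one, mul_one, mul_mul_mul_comm, hsqrt, ← exp_add]
    ring_nf
  rw [gaussianReal_of_var_ne_zero 0 one_ne_zero, prod_withDensity hmeas hmeas,
    integral_withDensity_eq_integral_toReal_smul (by fun_prop)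
      (.of_forall fun p => ENNReal.mul_lt_top gaussianPDF_lt_top gaussianPDF_lt_top),
    ← integral_const_mul, Measure.volume_eq_prod]
  simp_rw [hdensity, smul_eq_mul, mul_assoc]

theorem integral_gaussianReal_prod_of_homogeneous {F : ℝ × ℝ → ℝ} {d : ℝ} (hd : -2 < d)
    (hF : ∀ r > 0, ∀ p, F (r • p) = r ^ d * F p) :
    ∫ p, F p ∂(gaussianReal 0 1).prod (gaussianReal 0 1) =
      2 ^ (d / 2) * Gamma (d / 2 + 1) / (2 * π) * ∫ φ in -π..π, F (cos φ, sin φ) := by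
  have hpolar : ∀ p ∈ polarCoord.target,
      p.1 • (exp (-((polarCoord.symm p).1 ^ 2 + (polarCoord.symm p).2 ^ 2) / 2) *
        F (polarCoord.symm p)) =
      (p.1 ^ (d + 1) * exp (-(1 / 2) * p.1 ^ (2 : ℝ))) * F (cos p.2, sin p.2) := by
    rintro ⟨r, φ⟩ ⟨hr : 0 < r, -⟩
    have hnorm : (r * cos φ) ^ 2 + (r * sin φ) ^ 2 = r ^ 2 := by
      linear_combination r ^ 2 * cos_sq_add_sin_sq φ
    have hscale : F (r * cos φ, r * sin φ) = r ^ d * F (cos φ, sin φ) :=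
      hF r hr (cos φ, sin φ)
    simp only [polarCoord_symm_apply, hnorm, hscale, smul_eq_mul, rpow_add_one hr.ne', rpow_two]
    ring_nf
  have hradial : ∫ r in Set.Ioi (0 : ℝ), r ^ (d + 1) * exp (-(1 / 2) * r ^ (2 : ℝ)) =
      2 ^ (d / 2) * Gamma (d / 2 + 1) := by
    rw [integral_rpow_mul_exp_neg_mul_rpow two_pos (by linarith) (by norm_num)]
    rw [one_div, inv_rpow two_pos.le, ← rpow_neg two_pos.le,
      show -(-(d + 1 + 1) / 2) = d / 2 + 1 by ring, rpow_add_one two_ne_zero,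
      show (d + 1 + 1) / 2 = d / 2 + 1 by ring]
    ring
  rw [integral_gaussianReal_prod_gaussianReal, ← integral_comp_polarCoord_symm,
    setIntegral_congr_fun polarCoord.open_target.measurableSet hpolar, polarCoord_target,
    Measure.volume_eq_prod,
    setIntegral_prod_mul (fun r : ℝ => r ^ (d + 1) * exp (-(1 / 2) * r ^ (2 : ℝ)))
      (fun φ => F (cos φ, sin φ)), hradial,
    intervalIntegral.integral_of_le (by linarith [pi_pos]), integral_Ioc_eq_integral_Ioo]
  ring

lemma integral_cos_mul_cos_sub (θ : ℝ) :
    ∫ φ in (θ - π / 2)..(π / 2), cos φ * cos (φ - θ) =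
      (sin θ + (π - θ) * cos θ) / 2 := by
  have hprod (φ : ℝ) : cos φ * cos (φ - θ) = (cos (2 * φ - θ) + cos θ) / 2 := by
    rw [show 2 * φ - θ = φ + (φ - θ) by ring, cos_add,
      show cos θ = cos (φ - (φ - θ)) by ring_nf, cos_sub φ (φ - θ)]
    ring
  have hint : IntervalIntegrable (fun φ => cos (2 * φ - θ)) volume (θ - π / 2) (π / 2) :=
    Continuous.intervalIntegrable (by fun_prop) _ _
  simp_rw [hprod]
  rw [intervalIntegral.integral_div, intervalIntegral.integral_add hint (by simp),
    intervalIntegral.integral_comp_mul_sub cos two_ne_zero, integral_cos,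
    intervalIntegral.integral_const, show 2 * (π / 2) - θ = π - θ by ring,
    show 2 * (θ - π / 2) - θ = -(π - θ) by ring, sin_neg, sin_pi_sub, smul_eq_mul, smul_eq_mul]
  ring

lemma relu_cos_mul_relu_cos_sub {θ φ : ℝ} (hθ : θ ∈ Set.Icc 0 π) (hφ : φ ∈ Set.Ioc (-π) π) :
    relu (cos φ) * relu (cos (φ - θ)) =
      (Set.Ioc (θ - π / 2) (π / 2)).indicator (fun φ => cos φ * cos (φ - θ)) φ := by
  obtain ⟨hθ0, hθπ⟩ := hθ
  obtain ⟨hφ0, hφπ⟩ := hφ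
  rw [Set.indicator_apply]
  split_ifs with h
  · obtain ⟨hleft, hright⟩ := h
    rw [relu, relu, max_eq_right (cos_nonneg_of_mem_Icc ⟨by linarith, by linarith⟩),
      max_eq_right (cos_nonneg_of_mem_Icc ⟨by linarith, by linarith⟩)]
  · rw [mul_eq_zero, relu, relu, max_eq_left_iff, max_eq_left_iff]
    rw [Set.mem_Ioc, not_and_or, not_lt, not_le] at h
    rcases h with hleft | hright
    · rcases le_total φ (-(π / 2)) with hφ | hφ
      · left
        rw [← cos_neg]
        exact cos_nonpos_of_pi_div_two_le_of_le (by linarith) (by linarith)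
      · right
        rw [← cos_neg]
        exact cos_nonpos_of_pi_div_two_le_of_le (by linarith) (by linarith)
    · left
      exact cos_nonpos_of_pi_div_two_le_of_le (by linarith) (by linarith)

lemma integral_relu_cos_mul_relu_cos_sub {θ : ℝ} (hθ : θ ∈ Set.Icc 0 π) :
    ∫ φ in -π..π, relu (cos φ) * relu (cos (φ - θ)) = (sin θ + (π - θ) * cos θ) / 2 := by
  have hsub : Set.Ioc (θ - π / 2) (π / 2) ⊆ Set.Ioc (-π) π :=
    Set.Ioc_subset_Ioc (by linarith [hθ.1, pi_pos]) (by linarith [pi_pos])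
  rw [intervalIntegral.integral_of_le (by linarith [pi_pos]),
    setIntegral_congr_fun measurableSet_Ioc fun φ hφ => relu_cos_mul_relu_cos_sub hθ hφ,
    setIntegral_indicator measurableSet_Ioc, Set.inter_eq_self_of_subset_right hsub,
    ← intervalIntegral.integral_of_le (by linarith [hθ.2]), integral_cos_mul_cos_sub]

lemma integral_relu_mul_relu_gaussianReal_prod {θ : ℝ} (hθ : θ ∈ Set.Icc 0 π) :
    ∫ p, relu p.1 * relu (cos θ * p.1 + sin θ * p.2)
        ∂(gaussianReal 0 1).prod (gaussianReal 0 1) =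
      (sin θ + (π - θ) * cos θ) / (2 * π) := by
  have hhom : ∀ r > 0, ∀ p : ℝ × ℝ,
      relu (r • p).1 * relu (cos θ * (r • p).1 + sin θ * (r • p).2) =
        r ^ (2 : ℝ) * (relu p.1 * relu (cos θ * p.1 + sin θ * p.2)) := by
    intro r hr p
    have hlin : cos θ * (r • p).1 + sin θ * (r • p).2 = r * (cos θ * p.1 + sin θ * p.2) := by
      simp only [Prod.smul_fst, Prod.smul_snd, smul_eq_mul]
      ring
    rw [hlin, Prod.smul_fst, smul_eq_mul, relu_mul_of_nonneg hr.le, relu_mul_of_nonneg hr.le,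
      rpow_two]
    ring
  have hangle (φ : ℝ) : cos θ * cos φ + sin θ * sin φ = cos (φ - θ) := by
    rw [cos_sub]
    ring
  rw [integral_gaussianReal_prod_of_homogeneous (by norm_num) hhom]
  simp_rw [hangle]
  rw [integral_relu_cos_mul_relu_cos_sub hθ]
  norm_num

section Angle

open InnerProductGeometry

variable {E : Type*} [NormedAddCommGroup E] [InnerProductSpace ℝ E] [FiniteDimensional ℝ E]
  [MeasurableSpace E] [BorelSpace E]

theorem map_inner_pair_stdGaussian (x y : E) :
    (stdGaussian E).map (fun u => (⟪x, u⟫, ⟪y, u⟫)) =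
      ((gaussianReal 0 1).prod (gaussianReal 0 1)).map fun p =>
        (‖x‖ * p.1, ‖y‖ * (cos (angle x y) * p.1 + sin (angle x y) * p.2)) := by
  set θ := angle x y
  let a : EuclideanSpace ℝ (Fin 2) := !₂[‖x‖, 0]
  let b : EuclideanSpace ℝ (Fin 2) := !₂[‖y‖ * cos θ, ‖y‖ * sin θ]
  have hinner_a (v : EuclideanSpace ℝ (Fin 2)) : ⟪a, v⟫ = ‖x‖ * v 0 := by
    simp [a, PiLp.inner_apply, mul_comm]
  have hinner_b (v : EuclideanSpace ℝ (Fin 2)) :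
      ⟪b, v⟫ = ‖y‖ * (cos θ * v 0 + sin θ * v 1) := by
    rw [PiLp.inner_apply, Fin.sum_univ_two]
    change v 0 * (‖y‖ * cos θ) + v 1 * (‖y‖ * sin θ) = _
    ring
  have hnorm_a : ‖x‖ = ‖a‖ := by
    simp [a, EuclideanSpace.norm_eq]
  have hnorm_b : ‖y‖ = ‖b‖ := by
    rw [← sq_eq_sq₀ (norm_nonneg _) (norm_nonneg _), ← real_inner_self_eq_norm_sq b, hinner_b]
    change ‖y‖ ^ 2 = ‖y‖ * (cos θ * (‖y‖ * cos θ) + sin θ * (‖y‖ * sin θ))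
    linear_combination -‖y‖ ^ 2 * cos_sq_add_sin_sq θ
  have hab : ⟪x, y⟫ = ⟪a, b⟫ := by
    rw [← cos_angle_mul_norm_mul_norm x y, hinner_a]
    change cos θ * (‖x‖ * ‖y‖) = ‖x‖ * (‖y‖ * cos θ)
    ring
  rw [map_inner_pair_stdGaussian_congr hnorm_a hnorm_b hab, ← map_stdGaussian_fin_two,
    Measure.map_map (by fun_prop) (by fun_prop)]
  simp only [Function.comp_def, hinner_a, hinner_b]

theorem integral_relu_inner_mul_relu_inner_stdGaussian (x y : E) :
    ∫ u, relu ⟪x, u⟫ * relu ⟪y, u⟫ ∂stdGaussian E =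
      ‖x‖ * ‖y‖ * ((sin (angle x y) + (π - angle x y) * cos (angle x y)) / (2 * π)) := by
  have hcont : Continuous fun p : ℝ × ℝ => relu p.1 * relu p.2 := by fun_prop
  rw [← integral_relu_mul_relu_gaussianReal_prod ⟨angle_nonneg x y, angle_le_pi x y⟩,
    ← integral_const_mul,
    ← integral_map (φ := fun u => (⟪x, u⟫, ⟪y, u⟫)) (by fun_prop) hcont.aestronglyMeasurable,
    map_inner_pair_stdGaussian, integral_map (by fun_prop) hcont.aestronglyMeasurable]
  simp only [relu_mul_of_nonneg (norm_nonneg _), mul_mul_mul_comm]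

end Angle

/-- The degree-one arc-cosine kernel of Cho and Saul as a function of the correlation `ρ`, in the
normalization `E[ψ(X)ψ(Y)]` for a standard Gaussian pair; `π / 2 + arcsin ρ` is the usual
`π - arccos ρ`. -/
def arcCosKernel (ρ : ℝ) : ℝ := (√(1 - ρ ^ 2) + ρ * (π / 2 + arcsin ρ)) / (2 * π)

theorem reluKernel_eq_arcCosKernel {ρ : ℝ} (hρ : ρ ∈ Set.Icc 0 1) :
    reluKernel ρ = arcCosKernel ρ := by
  obtain ⟨hρ0, hρ1⟩ := hρ
  let a : EuclideanSpace ℝ (Fin 3) := !₂[√(1 - ρ), 0, √ρ]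
  let b : EuclideanSpace ℝ (Fin 3) := !₂[0, √(1 - ρ), √ρ]
  have hnorm_a : ‖a‖ = 1 := by
    simp [a, EuclideanSpace.norm_eq, Fin.sum_univ_three, sq_sqrt, hρ0, sub_nonneg.2 hρ1]
  have hnorm_b : ‖b‖ = 1 := by
    simp [b, EuclideanSpace.norm_eq, Fin.sum_univ_three, sq_sqrt, hρ0, sub_nonneg.2 hρ1]
  have hinner : ⟪a, b⟫ = ρ := by
    simp [a, b, PiLp.inner_apply, Fin.sum_univ_three, mul_self_sqrt hρ0]
  have hangle : InnerProductGeometry.angle a b = arccos ρ := by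
    rw [InnerProductGeometry.angle, hinner, hnorm_a, hnorm_b, mul_one, div_one]
  have hstd : reluKernel ρ =
      ∫ u, relu ⟪a, u⟫ * relu ⟪b, u⟫ ∂stdGaussian (EuclideanSpace ℝ (Fin 3)) := by
    rw [← map_pi_eq_stdGaussian,
      integral_map (by fun_prop) (Continuous.aestronglyMeasurable (by fun_prop))]
    simp [reluKernel, stdGaussian3, a, b, PiLp.inner_apply, Fin.sum_univ_three, mul_comm]
  rw [hstd, integral_relu_inner_mul_relu_inner_stdGaussian, hangle, hnorm_a, hnorm_b, sin_arccos,
    cos_arccos (by linarith) hρ1, arccos_eq_pi_div_two_sub_arcsin, arcCosKernel]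
  ring

lemma arcCosKernel_zero : arcCosKernel 0 = 1 / (2 * π) := by
  simp [arcCosKernel]

lemma hasDerivAt_arcCosKernel {ρ : ℝ} (hρ : ρ ∈ Set.Ioo (-1) 1) :
    HasDerivAt arcCosKernel ((π / 2 + arcsin ρ) / (2 * π)) ρ := by
  have hpos : 0 < 1 - ρ ^ 2 := by nlinarith [hρ.1, hρ.2]
  have hsqrt : HasDerivAt (fun x => √(1 - x ^ 2)) (-ρ / √(1 - ρ ^ 2)) ρ :=
    (((hasDerivAt_pow 2 ρ).const_sub 1).sqrt hpos.ne').congr_deriv (by field_simp; norm_num)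
  have harcsin : HasDerivAt (fun x => x * (π / 2 + arcsin x))
      (π / 2 + arcsin ρ + ρ / √(1 - ρ ^ 2)) ρ :=
    ((hasDerivAt_id' ρ).mul ((hasDerivAt_arcsin hρ.1.ne' hρ.2.ne).const_add (π / 2))).congr_deriv
      (by ring)
  exact ((hsqrt.add harcsin).div_const (2 * π)).congr_deriv (by ring)

lemma arcsin_le_pi_div_two_mul {x : ℝ} (hx : x ∈ Set.Icc 0 1) : arcsin x ≤ π / 2 * x := by
  have hjordan : 2 / π * arcsin x ≤ sin (arcsin x) :=
    mul_le_sin (arcsin_nonneg.2 hx.1) (arcsin_le_pi_div_two x)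
  rw [sin_arcsin (by linarith [hx.1]) hx.2] at hjordan
  calc arcsin x = π / 2 * (2 / π * arcsin x) := by field_simp
    _ ≤ π / 2 * x := by gcongr

theorem abs_arcCosKernel_sub_le {ρ : ℝ} (hρ : ρ ∈ Set.Icc 0 1) :
    |arcCosKernel ρ - 1 / (2 * π) - ρ / 4| ≤ 1 / 4 * ρ ^ 2 := by
  have hremainder : arcCosKernel ρ - 1 / (2 * π) - ρ / 4 =
      (ρ * arcsin ρ - (1 - √(1 - ρ ^ 2))) / (2 * π) := by
    rw [arcCosKernel]
    field_simp
    ring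
  have hsq : 0 ≤ 1 - ρ ^ 2 := by nlinarith [hρ.1, hρ.2]
  have hsqrt_lower : 1 - ρ ^ 2 ≤ √(1 - ρ ^ 2) := le_sqrt_of_sq_le (by nlinarith [sq_nonneg ρ])
  have hsqrt_le : √(1 - ρ ^ 2) ≤ 1 := sqrt_le_one.2 (by nlinarith [sq_nonneg ρ])
  have harcsin_nonneg : 0 ≤ ρ * arcsin ρ := mul_nonneg hρ.1 (arcsin_nonneg.2 hρ.1)
  have harcsin_le : ρ * arcsin ρ ≤ π / 2 * ρ ^ 2 := by
    nlinarith [mul_le_mul_of_nonneg_left (arcsin_le_pi_div_two_mul hρ) hρ.1]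
  rw [hremainder, abs_div, abs_of_pos two_pi_pos, div_le_iff₀ two_pi_pos, abs_le]
  constructor <;> nlinarith [pi_gt_three, sq_nonneg ρ]

theorem statement_15_general :
    reluKernel 0 = 1 / (2 * π) ∧
    HasDerivWithinAt reluKernel (1 / 4) (Set.Ici 0) 0 ∧
    ∀ ρ ∈ Set.Icc (0 : ℝ) 1, |reluKernel ρ - 1 / (2 * π) - ρ / 4| ≤ 1 / 4 * ρ ^ 2 := by
  have heq : Set.EqOn reluKernel arcCosKernel (Set.Icc 0 1) :=
    fun _ => reluKernel_eq_arcCosKernel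
  have hzero : reluKernel 0 = arcCosKernel 0 := heq (by simp)
  have hderiv : HasDerivAt arcCosKernel (1 / 4) 0 := by
    convert hasDerivAt_arcCosKernel (ρ := 0) (by norm_num) using 1
    rw [arcsin_zero, add_zero]
    field_simp
    norm_num
  refine ⟨hzero.trans arcCosKernel_zero, ?_, fun ρ hρ => ?_⟩
  · exact hderiv.hasDerivWithinAt.congr_of_eventuallyEq
      (heq.eventuallyEq_of_mem (Icc_mem_nhdsGE one_pos)) hzero
  · rw [heq hρ]
    exact abs_arcCosKernel_sub_le hρ

/-!
STATEMENT 15: (i) `f(0) = 1/(2π)`; (ii) `f` is right-differentiable at `0`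
with derivative `1/4`; (iii) `|f(ρ) − 1/(2π) − ρ/4| ≤ C ρ²` on `[0, 1/5]`
for some constant `C > 0`.
-/

theorem statement_15 :
    reluKernel 0 = 1 / (2 * π) ∧
    HasDerivWithinAt reluKernel (1 / 4) (Set.Ici 0) 0 ∧
    ∃ C : ℝ, 0 < C ∧ ∀ ρ ∈ Set.Icc (0 : ℝ) (1 / 5),
      |reluKernel ρ - 1 / (2 * π) - ρ / 4| ≤ C * ρ ^ 2 := by
  obtain ⟨hzero, hderiv, hbound⟩ := statement_15_general
  exact ⟨hzero, hderiv, 1 / 4, by norm_num, fun ρ hρ => hbound ρ ⟨hρ.1, by linarith [hρ.2]⟩⟩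

end
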